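/- arXiv:2211.14374 — 8 statements merged into one kernel-verified Lean document; each statement's English description precedes it below -/
import Mathlib

section
/- Let M and N be weight sequences and assume that N is log-convex. Then the following are equivalent: (i) there exists A ≥ 1 such that N_j ≤ A·M_j for all j ∈ ℕ; (ii) v_M ≼ v_N, i.e. there exists C ≥ 1 such that v_N(t) ≤ C·v_M(t) for all t ≥ 0. -/
open Filter Set

/-- The associated weight function `ω_M(t) = sup_j log(t^j / M_j)` for `t ≠ 0`, `ω_M(0) = 0`. -/
noncomputable def omegaM (M : ℕ → ℝ) (t : ℝ) : ℝ :=
  if t = 0 then 0 else ⨆ j : ℕ, Real.log (t ^ j / M j)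

/-- `v_M(t) = exp(-ω_M(t))`. -/
noncomputable def vM (M : ℕ → ℝ) (t : ℝ) : ℝ :=
  Real.exp (-(omegaM M t))

/-- `v_{M,c}(t) = exp(-ω_M(c·t))`. -/
noncomputable def vMc (M : ℕ → ℝ) (c t : ℝ) : ℝ :=
  Real.exp (-(omegaM M (c * t)))

/-- `v_M^c(t) = exp(-c·ω_M(t))`. -/
noncomputable def vMpow (M : ℕ → ℝ) (c t : ℝ) : ℝ :=
  Real.exp (-(c * omegaM M t))

/-- A weight sequence: positive, `M_0 = 1`, `(M_j)^{1/j} → ∞`. -/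
def WeightSeq (M : ℕ → ℝ) : Prop :=
  (∀ j, 0 < M j) ∧ M 0 = 1 ∧
    Tendsto (fun j : ℕ => (M j) ^ (1 / (j : ℝ))) atTop atTop

/-- Log-convexity: `M_j² ≤ M_{j-1}·M_{j+1}` for `j ≥ 1`. -/
def LogConvexSeq (M : ℕ → ℝ) : Prop :=
  ∀ j : ℕ, 1 ≤ j → (M j) ^ 2 ≤ M (j - 1) * M (j + 1)

/-- The class `LC`: normalized log-convex weight sequences. -/
def LCset (M : ℕ → ℝ) : Prop :=
  WeightSeq M ∧ LogConvexSeq M ∧ 1 ≤ M 1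

/-- Weighted space of entire functions with `sup |f(z)|·v(|z|) < ∞`. -/
def Hinf (v : ℝ → ℝ) : Set (ℂ → ℂ) :=
  {f | Differentiable ℂ f ∧
    ∃ C : ℝ, ∀ z : ℂ, ‖f z‖ * v ‖z‖ ≤ C}

/-- The weighted sup-norm `‖f‖_v`. -/
noncomputable def wnorm (v : ℝ → ℝ) (f : ℂ → ℂ) : ℝ :=
  ⨆ z : ℂ, ‖f z‖ * v ‖z‖

/-- A weight: strictly positive, continuous, non-increasing and rapidly
decreasing on `[0,∞)`. -/
def IsWeight (v : ℝ → ℝ) : Prop :=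
  (∀ t : ℝ, 0 ≤ t → 0 < v t) ∧ ContinuousOn v (Set.Ici 0) ∧
    AntitoneOn v (Set.Ici 0) ∧
    ∀ k : ℕ, Tendsto (fun t : ℝ => t ^ k * v t) atTop (nhds 0)

/-- A normalized weight: `v ≡ 1` on `[0,1]`. -/
def NormalizedWeight (v : ℝ → ℝ) : Prop :=
  ∀ t : ℝ, 0 ≤ t → t ≤ 1 → v t = 1

/-- A (log-)convex weight: `t ↦ -log v(eᵗ)` is convex on `ℝ`. -/
def ConvexWeight (v : ℝ → ℝ) : Prop :=
  ConvexOn ℝ Set.univ fun t : ℝ => -Real.log (v (Real.exp t))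

/-- Moderate growth for a weight: `v(H·t) ≤ e^H · v(t)²`. -/
def ModerateGrowthW (v : ℝ → ℝ) : Prop :=
  ∃ H : ℝ, 1 ≤ H ∧ ∀ t : ℝ, 0 ≤ t → v (H * t) ≤ Real.exp H * (v t) ^ 2

/-- Moderate growth (mg) for a sequence: `M_{j+k} ≤ C^{j+k}·M_j·M_k`. -/
def MGseq (M : ℕ → ℝ) : Prop :=
  ∃ C : ℝ, 1 ≤ C ∧ ∀ j k : ℕ, M (j + k) ≤ C ^ (j + k) * M j * M k

/-- The associated weight sequence `M^v_j = sup_{t>0} t^j·v(t)`. -/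
noncomputable def assocSeq (v : ℝ → ℝ) (j : ℕ) : ℝ :=
  ⨆ t : Set.Ioi (0 : ℝ), (t : ℝ) ^ j * v t

/-- The unit ball `B_{1/v}(ℂ)` of entire functions bounded by `1/v`. -/
def BClass (v : ℝ → ℝ) : Set (ℂ → ℂ) :=
  {f | Differentiable ℂ f ∧ ∀ z : ℂ, ‖f z‖ ≤ 1 / v ‖z‖}

/-- The associated growth condition `w̃_v(z) = sup{|f(z)| : f ∈ B_{1/v}}`. -/
noncomputable def wTilde (v : ℝ → ℝ) (z : ℂ) : ℝ :=
  sSup {x : ℝ | ∃ f ∈ BClass v, x = ‖f z‖}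

/-- The associated weight `ṽ = 1/w̃_v`, as a function of `t = |z|`. -/
noncomputable def vTilde (v : ℝ → ℝ) (t : ℝ) : ℝ :=
  1 / wTilde v (t : ℂ)

/-- An essential weight: `v ∼ ṽ`. -/
def Essential (v : ℝ → ℝ) : Prop :=
  ∃ C : ℝ, 1 ≤ C ∧ ∀ t : ℝ, 0 ≤ t →
    v t ≤ C * vTilde v t ∧ vTilde v t ≤ C * v t

/-- `P_v(t) = sup_j t^j/‖z^j‖_v`. -/
noncomputable def Pfun (v : ℝ → ℝ) (t : ℝ) : ℝ :=
  ⨆ j : ℕ, t ^ j / wnorm v fun z : ℂ => z ^ j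

/-- The convolved sequence `(M⋆N)_j = min_{0≤k≤j} M_k·N_{j-k}`. -/
noncomputable def convSeq (M N : ℕ → ℝ) (j : ℕ) : ℝ :=
  (Finset.range (j + 1)).inf' Finset.nonempty_range_add_one fun k => M k * N (j - k)
theorem bdd_aux (M : ℕ → ℝ) (hM : WeightSeq M) (t : ℝ) (ht : 0 < t) :
    BddAbove (range fun j : ℕ => Real.log (t ^ j / M j)) := by
  obtain ⟨hpos, -, hlim⟩ := hM
  apply Filter.IsBoundedUnder.bddAbove_range
  refine ⟨0, ?_⟩
  rw [Filter.eventually_map]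
  filter_upwards [hlim.eventually_ge_atTop t, eventually_ge_atTop 1] with j hj h1
  have hp := hpos j
  apply Real.log_nonpos (by positivity)
  rw [div_le_one hp]
  have h2 : t ^ j ≤ ((M j) ^ (1 / (j : ℝ))) ^ j := pow_le_pow_left₀ ht.le hj j
  rwa [one_div, Real.rpow_inv_natCast_pow hp.le (by omega)] at h2

theorem ratio_mono_aux (N : ℕ → ℝ) (hpos : ∀ j, 0 < N j) (h : LogConvexSeq N) :
    Monotone fun j => N (j + 1) / N j := by
  apply monotone_nat_of_le_succ
  intro j
  have h1 := h (j + 1) (by omega)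
  simp only [Nat.add_sub_cancel] at h1
  rw [div_le_div_iff₀ (hpos _) (hpos _)]
  nlinarith [h1]

theorem max_aux (N : ℕ → ℝ) (hpos : ∀ j, 0 < N j) (h : LogConvexSeq N) (j k : ℕ) :
    (N (j + 1) / N j) ^ k / N k ≤ (N (j + 1) / N j) ^ j / N j := by
  have hm := ratio_mono_aux N hpos h
  set t := N (j + 1) / N j with ht
  have htp : 0 < t := div_pos (hpos _) (hpos _)
  rcases le_total j k with hjk | hjk
  · induction k, hjk using Nat.le_induction with
    | base => exact le_rfl
    | succ k hk ih =>
      refine le_trans ?_ ih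
      have h1 : t ≤ N (k + 1) / N k := hm hk
      rw [le_div_iff₀ (hpos k)] at h1
      rw [div_le_div_iff₀ (hpos _) (hpos _), pow_succ]
      have := mul_le_mul_of_nonneg_left h1 (pow_pos htp k).le
      linarith
  · induction hjk using Nat.decreasingInduction with
    | self => exact le_rfl
    | of_succ k hk ih =>
      refine le_trans ?_ ih
      have h1 : N (k + 1) / N k ≤ t := hm hk.le
      rw [div_le_iff₀ (hpos k)] at h1
      rw [div_le_div_iff₀ (hpos _) (hpos _), pow_succ]
      have := mul_le_mul_of_nonneg_left h1 (pow_pos htp k).le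
      linarith

/-- Proposition: for weight sequences `M`, `N` with `N` log-convex,
`N_j ≤ A·M_j` for all `j` is equivalent to `v_M ≼ v_N`. -/
theorem stmt0 (M N : ℕ → ℝ) (hM : WeightSeq M) (hN : WeightSeq N)
    (hNlc : LogConvexSeq N) :
    (∃ A : ℝ, 1 ≤ A ∧ ∀ j : ℕ, N j ≤ A * M j) ↔
      (∃ C : ℝ, 1 ≤ C ∧ ∀ t : ℝ, 0 ≤ t → vM N t ≤ C * vM M t) := by
  have hMp := hM.1
  have hNp := hN.1
  constructor
  · rintro ⟨A, hA, h⟩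
    have hA0 : 0 < A := by linarith
    refine ⟨A, hA, fun t ht => ?_⟩
    unfold vM
    rcases ht.eq_or_lt with rfl | ht
    · simpa [omegaM] using hA
    · have key : omegaM M t ≤ Real.log A + omegaM N t := by
        simp only [omegaM, ht.ne', if_false]
        apply ciSup_le
        intro j
        have h2 := le_ciSup (bdd_aux N hN t ht) j
        have hMj := hMp j
        have hNj := hNp j
        have h3 : Real.log (t ^ j / M j) ≤ Real.log (A * (t ^ j / N j)) := by
          apply Real.log_le_log (by positivity)
          rw [← mul_div_assoc, div_le_div_iff₀ hMj hNj]
          have := mul_le_mul_of_nonneg_left (h j) (pow_pos ht j).le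
          linarith
        rw [Real.log_mul hA0.ne' (by positivity)] at h3
        exact h3.trans (by gcongr)
      calc Real.exp (-omegaM N t) ≤ Real.exp (Real.log A + -omegaM M t) :=
            Real.exp_le_exp.2 (by linarith)
        _ = _ := by rw [Real.exp_add, Real.exp_log hA0]
  · rintro ⟨C, hC, h⟩
    have hC0 : 0 < C := by linarith
    refine ⟨C, hC, fun j => ?_⟩
    have hMj := hMp j
    have hNj := hNp j
    have hmax := max_aux N hNp hNlc j
    have ht : 0 < N (j + 1) / N j := div_pos (hNp _) hNj
    generalize N (j + 1) / N j = t at hmax ht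
    have h1 := h t ht.le
    unfold vM at h1
    rw [← Real.exp_log hC0, ← Real.exp_add, Real.exp_le_exp] at h1
    have h2 : omegaM N t ≤ Real.log (t ^ j / N j) := by
      simp only [omegaM, ht.ne', if_false]
      apply ciSup_le
      intro k
      have := hNp k
      exact Real.log_le_log (by positivity) (hmax k)
    have h3 : Real.log (t ^ j / M j) ≤ omegaM M t := by
      simp only [omegaM, ht.ne', if_false]
      exact le_ciSup (bdd_aux M hM t ht) j
    have hp : 0 < t ^ j := by positivity
    rw [Real.log_div hp.ne' hNj.ne'] at h2
    rw [Real.log_div hp.ne' hMj.ne'] at h3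
    rw [← Real.log_le_log_iff hNj (by positivity), Real.log_mul hC0.ne' hMj.ne']
    linarith
end

section
/- Let M be a log-convex weight sequence. Then for all d > c > 0, the quotient v_{M,c}(t)/v_{M,d}(t) tends to +∞ as t → +∞; equivalently, ω_M(d·t) − ω_M(c·t) → +∞ as t → +∞. -/
open Filter Set

lemma aux_bdd (M : ℕ → ℝ) (hM : WeightSeq M) (s : ℝ) (hs : 0 < s) :
    BddAbove (Set.range fun j : ℕ => Real.log (s ^ j / M j)) := by
  obtain ⟨hpos, -, hlim⟩ := hM
  apply Filter.IsBoundedUnder.bddAbove_range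
  refine ⟨0, ?_⟩
  rw [Filter.eventually_map]
  filter_upwards [hlim.eventually_ge_atTop s, eventually_ge_atTop 1] with j hj hj1
  have hj0 : (j : ℝ) ≠ 0 := by positivity
  have h1 : s ^ j ≤ M j := by
    have h2 : s ^ j ≤ ((M j) ^ (1 / (j : ℝ))) ^ j := by gcongr
    have h3 : ((M j) ^ (1 / (j : ℝ))) ^ j = M j := by
      rw [← Real.rpow_natCast, ← Real.rpow_mul (hpos j).le, one_div_mul_cancel hj0, Real.rpow_one]
    rwa [h3] at h2
  apply Real.log_nonpos
  · have := hpos j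
    positivity
  · exact (div_le_one (hpos j)).2 h1

lemma aux_log (M : ℕ → ℝ) (hM : WeightSeq M) (s : ℝ) (hs : 0 < s) (j : ℕ) :
    Real.log (s ^ j / M j) = j * Real.log s - Real.log (M j) := by
  rw [Real.log_div (by positivity) (hM.1 j).ne', Real.log_pow]

lemma aux_main (M : ℕ → ℝ) (hM : WeightSeq M) (c d : ℝ) (hc : 0 < c) (hcd : c < d) :
    Tendsto (fun t : ℝ => omegaM M (d * t) - omegaM M (c * t)) atTop atTop := by
  have hd : 0 < d := hc.trans hcd
  have hL : 0 < Real.log d - Real.log c := sub_pos.2 (Real.log_lt_log hc hcd)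
  rw [tendsto_atTop]
  intro b
  obtain ⟨N, hN⟩ := exists_nat_ge (b / (Real.log d - Real.log c))
  rw [div_le_iff₀ hL] at hN
  have hlog : Tendsto (fun t : ℝ => Real.log (c * t)) atTop atTop :=
    Real.tendsto_log_atTop.comp (tendsto_id.const_mul_atTop hc)
  have hev : ∀ᶠ t : ℝ in atTop, ∀ j ∈ Finset.range N,
      Real.log (M N) - Real.log (M j) ≤ Real.log (c * t) := by
    rw [Filter.eventually_all_finset]
    intro j _
    exact hlog.eventually_ge_atTop _
  filter_upwards [hev, eventually_gt_atTop 0, hlog.eventually_ge_atTop 0] with t ht ht0 hl0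
  have hct : 0 < c * t := by positivity
  have hdt : 0 < d * t := by positivity
  have hB := aux_bdd M hM (d * t) hdt
  have hlogd : Real.log (d * t) = Real.log (c * t) + (Real.log d - Real.log c) := by
    rw [Real.log_mul hd.ne' ht0.ne', Real.log_mul hc.ne' ht0.ne']; ring
  have key : omegaM M (c * t) ≤ omegaM M (d * t) - b := by
    unfold omegaM
    rw [if_neg hct.ne', if_neg hdt.ne']
    apply ciSup_le
    have big : ∀ j : ℕ, N ≤ j → Real.log ((c * t) ^ j / M j) ≤
        (⨆ j : ℕ, Real.log ((d * t) ^ j / M j)) - b := by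
      intro j hj
      have h1 := le_ciSup hB j
      rw [aux_log M hM _ hdt, hlogd] at h1
      rw [aux_log M hM _ hct]
      have h2 : (N : ℝ) ≤ j := by exact_mod_cast hj
      nlinarith [mul_le_mul_of_nonneg_right h2 hL.le]
    intro j
    rcases le_or_gt N j with hj | hj
    · exact big j hj
    · refine le_trans ?_ (big N le_rfl)
      rw [aux_log M hM _ hct, aux_log M hM _ hct]
      have h1 := ht j (Finset.mem_range.2 hj)
      have h2 : (j : ℝ) + 1 ≤ N := by exact_mod_cast hj
      nlinarith [mul_le_mul_of_nonneg_right h2 hl0]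
  linarith

/-- Lemma: for a log-convex weight sequence `M` and `d > c > 0`,
`v_{M,c}(t)/v_{M,d}(t) → ∞`; equivalently `ω_M(d·t) - ω_M(c·t) → ∞`. -/
theorem stmt1 (M : ℕ → ℝ) (hM : WeightSeq M) (hMlc : LogConvexSeq M) :
    ∀ c d : ℝ, 0 < c → c < d →
      Tendsto (fun t : ℝ => vMc M c t / vMc M d t) atTop atTop ∧
      Tendsto (fun t : ℝ => omegaM M (d * t) - omegaM M (c * t)) atTop atTop := by
  intro c d hc hcd
  have h := aux_main M hM c d hc hcd
  refine ⟨?_, h⟩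
  have h2 := Real.tendsto_exp_atTop.comp h
  refine h2.congr fun t => ?_
  simp only [Function.comp, vMc]
  rw [← Real.exp_sub]
  congr 1
  ring
end

section
/- Let u and v be weights. Then the following are equivalent: (i) ũ ≼ v, i.e. there exists C ≥ 1 with v(t) ≤ C·ũ(t) for all t ≥ 0; (ii) ũ ≼ ṽ; (iii) H^∞_u(ℂ) ⊆ H^∞_v(ℂ). In particular, if u is essential then H^∞_u(ℂ) ⊆ H^∞_v(ℂ) if and only if u ≼ v. -/
open Filter Set

lemma wT_bdd {u : ℝ → ℝ} (z : ℂ) : BddAbove {x : ℝ | ∃ f ∈ BClass u, x = ‖f z‖} :=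
  ⟨1 / u ‖z‖, by rintro x ⟨f, hf, rfl⟩; exact hf.2 z⟩

lemma const_mem {u : ℝ → ℝ} (hu : IsWeight u) : (fun _ : ℂ => ((1 / u 0 : ℝ) : ℂ)) ∈ BClass u := by
  have h0 := hu.1 0 le_rfl
  refine ⟨differentiable_const _, fun z => ?_⟩
  rw [Complex.norm_real, Real.norm_of_nonneg (by positivity)]
  exact one_div_le_one_div_of_le (hu.1 _ (norm_nonneg z))
    (hu.2.2.1 (by simp) (by simp) (norm_nonneg z))

lemma wT_pos {u : ℝ → ℝ} (hu : IsWeight u) (z : ℂ) : 0 < wTilde u z := by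
  have h0 := hu.1 0 le_rfl
  have h : ‖((1 / u 0 : ℝ) : ℂ)‖ ≤ wTilde u z := le_csSup (wT_bdd z) ⟨_, const_mem hu, rfl⟩
  rw [Complex.norm_real, Real.norm_of_nonneg (by positivity)] at h
  exact lt_of_lt_of_le (by positivity) h

lemma wT_le {u : ℝ → ℝ} (hu : IsWeight u) (z : ℂ) {b : ℝ}
    (h : ∀ f ∈ BClass u, ‖f z‖ ≤ b) : wTilde u z ≤ b :=
  csSup_le ⟨_, _, const_mem hu, rfl⟩ (by rintro x ⟨f, hf, rfl⟩; exact h f hf)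

/-- One half of radiality: values of members of the class are dominated on circles. -/
lemma le_wT {u : ℝ → ℝ} {f : ℂ → ℂ} (hf : f ∈ BClass u) (z : ℂ) :
    ‖f z‖ ≤ wTilde u ((‖z‖ : ℝ) : ℂ) := by
  obtain ⟨a, ha, haz⟩ : ∃ a : ℂ, ‖a‖ = 1 ∧ a * ((‖z‖ : ℝ) : ℂ) = z := by
    refine ⟨Complex.exp (Complex.arg z * Complex.I), Complex.norm_exp_ofReal_mul_I _, ?_⟩
    rw [mul_comm]; exact Complex.norm_mul_exp_arg_mul_I z
  refine le_csSup (wT_bdd _) ⟨fun w => f (a * w), ⟨?_, fun w => ?_⟩, ?_⟩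
  · exact hf.1.comp (by fun_prop)
  · simpa [ha] using hf.2 (a * w)
  · simp only [haz]

lemma le_vT {u : ℝ → ℝ} (hu : IsWeight u) {t : ℝ} (ht : 0 ≤ t) : u t ≤ vTilde u t := by
  have h := hu.1 t ht
  have h1 : wTilde u (t : ℂ) ≤ 1 / u t := wT_le hu _ fun f hf => by
    simpa [abs_of_nonneg ht] using hf.2 (t : ℂ)
  rw [vTilde, le_div_iff₀ (wT_pos hu _)]
  rw [le_div_iff₀ h] at h1
  linarith

/-- `v ≤ C ũ` in terms of the ball. -/
lemma ball_bound {u v : ℝ → ℝ} (hu : IsWeight u) {C : ℝ}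
    (h : ∀ t : ℝ, 0 ≤ t → v t ≤ C * vTilde u t) {f : ℂ → ℂ} (hf : f ∈ BClass u) (z : ℂ)
    (hC : 0 ≤ C) (hv : 0 ≤ v ‖z‖) :
    ‖f z‖ * v ‖z‖ ≤ C := by
  have h1 := h _ (norm_nonneg z)
  have h2 := le_wT hf z
  have h3 := wT_pos hu ((‖z‖ : ℝ) : ℂ)
  rw [vTilde, mul_one_div, le_div_iff₀ h3] at h1
  nlinarith [mul_le_mul_of_nonneg_right h2 hv]

lemma smul_mem {u : ℝ → ℝ} (hu : IsWeight u) {f : ℂ → ℂ} {C : ℝ} (hC : 0 < C)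
    (hf : Differentiable ℂ f) (h : ∀ z : ℂ, ‖f z‖ * u ‖z‖ ≤ C) :
    (fun z => ((C⁻¹ : ℝ) : ℂ) * f z) ∈ BClass u := by
  refine ⟨by fun_prop, fun z => ?_⟩
  have := hu.1 _ (norm_nonneg z)
  rw [norm_mul, Complex.norm_real, Real.norm_of_nonneg (by positivity), le_div_iff₀ this,
    mul_assoc, inv_mul_le_iff₀ hC]
  simpa using h z

open BoundedContinuousFunction in
/-- `H^∞_u` realised inside the bounded continuous functions. -/
def HinfSubm (u : ℝ → ℝ) : Submodule ℂ (ℂ →ᵇ ℂ) where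
  carrier := {g | Differentiable ℂ fun z => g z * (((u ‖z‖)⁻¹ : ℝ) : ℂ)}
  add_mem' := by
    intro a b ha hb
    have := Differentiable.add ha hb
    simp only [Set.mem_setOf_eq, BoundedContinuousFunction.coe_add, Pi.add_apply, add_mul] at *
    exact this
  zero_mem' := by simp
  smul_mem' := by
    intro c a ha
    have := Differentiable.const_mul ha c
    simp only [Set.mem_setOf_eq, BoundedContinuousFunction.coe_smul, smul_eq_mul, mul_assoc] at *
    exact this

lemma HinfSubm_closed {u : ℝ → ℝ} (hu : IsWeight u) : 
    IsClosed (HinfSubm u : Set (BoundedContinuousFunction ℂ ℂ)) := by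
  refine IsSeqClosed.isClosed fun g G hg hG => ?_
  change Differentiable ℂ fun z => G z * (((u ‖z‖)⁻¹ : ℝ) : ℂ)
  rw [← differentiableOn_univ]
  refine TendstoLocallyUniformlyOn.differentiableOn (φ := atTop)
    (F := fun n z => g n z * (((u ‖z‖)⁻¹ : ℝ) : ℂ)) ?_
    (Eventually.of_forall fun n => (hg n : Differentiable ℂ _).differentiableOn) isOpen_univ
  rw [tendstoLocallyUniformlyOn_univ, tendstoLocallyUniformly_iff_forall_isCompact]
  intro K hK
  obtain ⟨R, hR0, hR⟩ := hK.isBounded.exists_pos_norm_le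
  have hRp := hu.1 R hR0.le
  rw [Metric.tendstoUniformlyOn_iff]
  intro ε hε
  filter_upwards [(Metric.tendsto_nhds.1 hG) (ε * u R) (by positivity)] with n hn z hz
  have hz' := hR z hz
  have h1 : u R ≤ u ‖z‖ := hu.2.2.1 (by simp) (by simpa using hR0.le) hz'
  have h2 := hu.1 _ (norm_nonneg z)
  have h3 : dist (g n z) (G z) ≤ dist (g n) G := BoundedContinuousFunction.dist_coe_le_dist z
  rw [dist_comm, dist_eq_norm, ← sub_mul, norm_mul, Complex.norm_real,
    Real.norm_of_nonneg (by positivity), ← dist_eq_norm, ← div_eq_mul_inv, div_lt_iff₀ h2]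
  nlinarith

lemma incl_bound {u v : ℝ → ℝ} (hu : IsWeight u) (hv : IsWeight v) (h : Hinf u ⊆ Hinf v) :
    ∃ C : ℝ, ∀ f ∈ BClass u, ∀ z : ℂ, ‖f z‖ * v ‖z‖ ≤ C := by
  haveI : CompleteSpace (HinfSubm u) := (HinfSubm_closed hu).completeSpace_coe
  let L : ℂ → (HinfSubm u) →L[ℂ] ℂ := fun z =>
    ((((u ‖z‖)⁻¹ * v ‖z‖ : ℝ) : ℂ)) • 
      ((BoundedContinuousFunction.evalCLM ℂ z).comp (HinfSubm u).subtypeL)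
  have hL : ∀ z (g : HinfSubm u), ‖L z g‖ = ‖g.1 z * (((u ‖z‖)⁻¹ : ℝ) : ℂ)‖ * v ‖z‖ := by
    intro z g
    have h1 := hu.1 _ (norm_nonneg z)
    have h2 := hv.1 _ (norm_nonneg z)
    have : L z g = (((u ‖z‖)⁻¹ * v ‖z‖ : ℝ) : ℂ) * g.1 z := rfl
    rw [this, norm_mul, norm_mul, Complex.norm_real, Complex.norm_real,
      Real.norm_of_nonneg (by positivity), Real.norm_of_nonneg (by positivity)]
    ring
  obtain ⟨C, hC⟩ := banach_steinhaus (g := L) (by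
    intro g
    have hg : (fun z => g.1 z * (((u ‖z‖)⁻¹ : ℝ) : ℂ)) ∈ Hinf u := by
      refine ⟨g.2, ‖g.1‖, fun z => ?_⟩
      have h1 := hu.1 _ (norm_nonneg z)
      rw [norm_mul, Complex.norm_real, Real.norm_of_nonneg (by positivity), mul_assoc,
        inv_mul_cancel₀ h1.ne', mul_one]
      exact g.1.norm_coe_le_norm z
    obtain ⟨-, C, hC⟩ := h hg
    exact ⟨C, fun z => by rw [hL]; exact hC z⟩)
  refine ⟨C, fun f hf z => ?_⟩
  have hcu : Continuous fun z : ℂ => u ‖z‖ :=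
    hu.2.1.comp_continuous continuous_norm (fun z => norm_nonneg z)
  have hb : ∀ z : ℂ, ‖f z * ((u ‖z‖ : ℝ) : ℂ)‖ ≤ 1 := by
    intro z
    have h1 := hu.1 _ (norm_nonneg z)
    rw [norm_mul, Complex.norm_real, Real.norm_of_nonneg h1.le]
    exact (le_div_iff₀ h1).1 (hf.2 z)
  let G : BoundedContinuousFunction ℂ ℂ := BoundedContinuousFunction.ofNormedAddCommGroup
    (fun z => f z * ((u ‖z‖ : ℝ) : ℂ))
    (hf.1.continuous.mul (Complex.continuous_ofReal.comp hcu)) 1 hb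
  have hGz : ∀ z, G z * (((u ‖z‖)⁻¹ : ℝ) : ℂ) = f z := by
    intro z
    have h1 := (hu.1 _ (norm_nonneg z)).ne'
    change f z * ((u ‖z‖ : ℝ) : ℂ) * (((u ‖z‖)⁻¹ : ℝ) : ℂ) = f z
    rw [mul_assoc, ← Complex.ofReal_mul, mul_inv_cancel₀ h1]; simp
  have hG : G ∈ HinfSubm u := by
    change Differentiable ℂ fun z => G z * (((u ‖z‖)⁻¹ : ℝ) : ℂ)
    simp only [hGz]; exact hf.1
  have hGn : ‖(⟨G, hG⟩ : HinfSubm u)‖ ≤ 1 :=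
    BoundedContinuousFunction.norm_ofNormedAddCommGroup_le _ zero_le_one hb
  have h1 := hL z ⟨G, hG⟩
  simp only [hGz] at h1
  rw [← h1]
  calc _ ≤ ‖L z‖ * ‖(⟨G, hG⟩ : HinfSubm u)‖ := (L z).le_opNorm _
    _ ≤ ‖L z‖ * 1 := by gcongr
    _ ≤ C := by simpa using hC z

/-- Theorem: for weights `u`, `v` the conditions `ũ ≼ v`, `ũ ≼ ṽ` and
`H^∞_u(ℂ) ⊆ H^∞_v(ℂ)` are equivalent; if `u` is essential, the inclusion holds
iff `u ≼ v`. -/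
theorem stmt3 (u v : ℝ → ℝ) (hu : IsWeight u) (hv : IsWeight v) :
    ((∃ C : ℝ, 1 ≤ C ∧ ∀ t : ℝ, 0 ≤ t → v t ≤ C * vTilde u t) ↔
      (∃ C : ℝ, 1 ≤ C ∧ ∀ t : ℝ, 0 ≤ t → vTilde v t ≤ C * vTilde u t)) ∧
    ((∃ C : ℝ, 1 ≤ C ∧ ∀ t : ℝ, 0 ≤ t → v t ≤ C * vTilde u t) ↔
      Hinf u ⊆ Hinf v) ∧
    (Essential u →
      (Hinf u ⊆ Hinf v ↔
        ∃ C : ℝ, 1 ≤ C ∧ ∀ t : ℝ, 0 ≤ t → v t ≤ C * u t)) := by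
  have key : (∃ C : ℝ, 1 ≤ C ∧ ∀ t : ℝ, 0 ≤ t → v t ≤ C * vTilde u t) ↔ Hinf u ⊆ Hinf v := by
    constructor
    · rintro ⟨C, hC, h⟩ f ⟨hf, D, hD⟩
      refine ⟨hf, (max D 1) * C, fun z => ?_⟩
      have hM : 0 < max D 1 := lt_max_of_lt_right one_pos
      have h1 := ball_bound hu h (smul_mem hu hM hf fun z => (hD z).trans (le_max_left _ _)) z
        (by linarith) (hv.1 _ (norm_nonneg z)).le
      rw [norm_mul, Complex.norm_real, Real.norm_of_nonneg (by positivity),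
        mul_assoc, inv_mul_le_iff₀ hM] at h1
      exact h1
    · intro h
      obtain ⟨C, hC⟩ := incl_bound hu hv h
      refine ⟨max C 1, le_max_right _ _, fun t ht => ?_⟩
      have hvt := hv.1 t ht
      have h1 : wTilde u (t : ℂ) ≤ max C 1 / v t := wT_le hu _ fun f hf => by
        rw [le_div_iff₀ hvt]
        have := hC f hf t
        rw [Complex.norm_real, Real.norm_of_nonneg ht] at this
        exact this.trans (le_max_left _ _)
      rw [le_div_iff₀ hvt] at h1
      rw [vTilde, mul_one_div, le_div_iff₀ (wT_pos hu _)]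
      linarith
  refine ⟨⟨?_, ?_⟩, key, ?_⟩
  · rintro ⟨C, hC, h⟩
    refine ⟨C, hC, fun t ht => ?_⟩
    have hC0 : 0 < C := by linarith
    have h1 : wTilde u (t : ℂ) ≤ C * wTilde v (t : ℂ) := wT_le hu _ fun f hf => by
      have h2 := le_wT (smul_mem hv hC0 hf.1 fun z => ball_bound hu h hf z hC0.le
        (hv.1 _ (norm_nonneg z)).le) (t : ℂ)
      rw [norm_mul, Complex.norm_real, Real.norm_of_nonneg (by positivity),
        inv_mul_le_iff₀ hC0, Complex.norm_real, Real.norm_of_nonneg ht] at h2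
      exact h2
    rw [vTilde, vTilde, mul_one_div, div_le_div_iff₀ (wT_pos hv _) (wT_pos hu _)]
    linarith
  · rintro ⟨C, hC, h⟩
    exact ⟨C, hC, fun t ht => (le_vT hv ht).trans (h t ht)⟩
  · rintro ⟨D, hD, hE⟩
    rw [← key]
    constructor
    · rintro ⟨C, hC, h⟩
      refine ⟨C * D, by nlinarith, fun t ht => (h t ht).trans ?_⟩
      rw [mul_assoc]
      exact mul_le_mul_of_nonneg_left (hE t ht).2 (by linarith)
    · rintro ⟨C, hC, h⟩
      exact ⟨C, hC, fun t ht => (h t ht).trans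
        (mul_le_mul_of_nonneg_left (le_vT hu ht) (by linarith))⟩
end

section
/- Let M be a log-convex weight sequence. Then the associated weight of v_M coincides with v_M, i.e. w̃_{v_M}(z) = exp(ω_M(|z|)) for all z ∈ ℂ, so ṽ_M = v_M; in particular the weight v_M is essential. -/
open Filter Set

lemma omega_bdd (M : ℕ → ℝ) (hM : WeightSeq M) (t : ℝ) (ht : 0 < t) :
    BddAbove (Set.range fun j : ℕ => Real.log (t ^ j / M j)) := by
  obtain ⟨hpos, h0, hlim⟩ := hM
  have hev := (hlim.eventually_ge_atTop t).and (eventually_ge_atTop 1)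
  have h2 : ∀ᶠ j : ℕ in atTop, Real.log (t ^ j / M j) ≤ 0 := by
    filter_upwards [hev] with j hj
    obtain ⟨h1, hj1⟩ := hj
    have hp := hpos j
    apply Real.log_nonpos (by positivity)
    rw [div_le_one hp]
    calc t ^ j ≤ (M j ^ (1 / (j : ℝ))) ^ j := by gcongr
      _ = M j := by
        rw [one_div, Real.rpow_inv_natCast_pow hp.le (by omega)]
  exact (Filter.isBoundedUnder_of_eventually_le h2).bddAbove_range

lemma le_exp_omega (M : ℕ → ℝ) (hM : WeightSeq M) (t : ℝ) (ht : 0 ≤ t) (j : ℕ) :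
    t ^ j / M j ≤ Real.exp (omegaM M t) := by
  have hp := hM.1 j
  rcases ht.eq_or_lt with rfl | ht
  · simp only [omegaM, if_true, Real.exp_zero]
    rcases j with _ | j
    · simp [hM.2.1]
    · simp
  · rw [← Real.log_le_iff_le_exp (by positivity), omegaM, if_neg ht.ne']
    exact le_ciSup (omega_bdd M hM t ht) j

lemma mono_mem (M : ℕ → ℝ) (hM : WeightSeq M) (j : ℕ) :
    (fun z : ℂ => z ^ j / (M j : ℂ)) ∈ BClass (vM M) := by
  refine ⟨by fun_prop, fun z => ?_⟩
  have hp := hM.1 j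
  rw [vM, Real.exp_neg, one_div, inv_inv, norm_div, norm_pow, Complex.norm_real,
    Real.norm_of_nonneg hp.le]
  exact le_exp_omega M hM _ (norm_nonneg z) j

lemma wTilde_eq (M : ℕ → ℝ) (hM : WeightSeq M) (z : ℂ) :
    wTilde (vM M) z = Real.exp (omegaM M ‖z‖) := by
  have hub : ∀ x ∈ {x : ℝ | ∃ f ∈ BClass (vM M), x = ‖f z‖}, x ≤ Real.exp (omegaM M ‖z‖) := by
    rintro x ⟨f, hf, rfl⟩
    have := hf.2 z
    rwa [vM, Real.exp_neg, one_div, inv_inv] at this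
  have hle : ∀ j : ℕ, ‖z‖ ^ j / M j ≤ wTilde (vM M) z := by
    intro j
    refine le_csSup ⟨_, hub⟩ ⟨_, mono_mem M hM j, ?_⟩
    rw [norm_div, norm_pow, Complex.norm_real, Real.norm_of_nonneg (hM.1 j).le]
  have h1 : 1 ≤ wTilde (vM M) z := by simpa [hM.2.1] using hle 0
  apply le_antisymm
  · exact csSup_le ⟨_, _, mono_mem M hM 0, rfl⟩ hub
  · rw [← Real.le_log_iff_exp_le (by linarith), omegaM]
    split_ifs with h
    · exact Real.log_nonneg h1
    · have hz : 0 < ‖z‖ := lt_of_le_of_ne (norm_nonneg z) (Ne.symm h)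
      refine ciSup_le fun j => ?_
      have hp := hM.1 j
      exact Real.log_le_log (by positivity) (hle j)

/-- Theorem: for a log-convex weight sequence `M`, the associated weight of
`v_M` coincides with `v_M`: `w̃_{v_M}(z) = exp(ω_M(|z|))`, so `ṽ_M = v_M` and
`v_M` is essential. -/
theorem stmt4 (M : ℕ → ℝ) (hM : WeightSeq M) (hMlc : LogConvexSeq M) :
    (∀ z : ℂ, wTilde (vM M) z = Real.exp (omegaM M ‖z‖)) ∧
    (∀ t : ℝ, 0 ≤ t → vTilde (vM M) t = vM M t) ∧
    Essential (vM M) := by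
  have h1 := wTilde_eq M hM
  have h2 : ∀ t : ℝ, 0 ≤ t → vTilde (vM M) t = vM M t := by
    intro t ht
    rw [vTilde, h1, Complex.norm_real, Real.norm_of_nonneg ht, vM, Real.exp_neg, one_div]
  refine ⟨h1, h2, 1, le_rfl, fun t ht => ?_⟩
  rw [h2 t ht]
  simp
end

section
/- Let M be a weight sequence and c > 0. Then the power series θ_{M,c}(z) := Σ_{j≥0} (c·z)^j/(2^j·M_j) converges for every z ∈ ℂ and defines an entire function satisfying |θ_{M,c}(z)| ≤ 2·exp(ω_M(c·|z|)) for all z ∈ ℂ (so θ_{M,c} ∈ H^∞_{v_{M,c}}(ℂ) with ‖θ_{M,c}‖_{v_{M,c}} ≤ 2), and θ_{M,c}(t) ≥ exp(ω_M(c·t/2)) for all real t ≥ 0. -/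
open Filter Set

lemma term_bound (M : ℕ → ℝ) (hM : WeightSeq M) (c : ℝ) (hc : 0 < c) (R : ℝ) (z : ℂ)
    (hz : ‖z‖ ≤ R) (j : ℕ) :
    ‖((c : ℂ) * z) ^ j / ((2 : ℂ) ^ j * (M j : ℂ))‖ ≤
      Real.exp (omegaM M (c * R)) * (1 / 2) ^ j := by
  have hR : 0 ≤ R := (norm_nonneg z).trans hz
  have hj := hM.1 j
  have h := le_exp_omega M hM (c * R) (by positivity) j
  have e : ‖((c : ℂ) * z) ^ j / ((2 : ℂ) ^ j * (M j : ℂ))‖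
      = (c * ‖z‖) ^ j / M j * (1 / 2) ^ j := by
    rw [norm_div, norm_mul, norm_pow, norm_pow, norm_mul, Complex.norm_real, Complex.norm_real,
      Real.norm_of_nonneg hc.le, Real.norm_of_nonneg hj.le, Complex.norm_ofNat, one_div, inv_pow]
    field_simp
  rw [e]
  gcongr
  refine le_trans ?_ h
  gcongr

/-- Lemma: for a weight sequence `M` and `c > 0`, the series
`θ_{M,c}(z) = Σ_j (c·z)^j/(2^j·M_j)` converges everywhere, defines an entire
function with `|θ_{M,c}(z)| ≤ 2·exp(ω_M(c·|z|))` (so `θ_{M,c} ∈ H^∞_{v_{M,c}}`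
with norm at most `2`) and `θ_{M,c}(t) ≥ exp(ω_M(c·t/2))` for `t ≥ 0`. -/
theorem stmt7 (M : ℕ → ℝ) (hM : WeightSeq M) (c : ℝ) (hc : 0 < c) :
    (∀ z : ℂ,
      Summable fun j : ℕ => ((c : ℂ) * z) ^ j / ((2 : ℂ) ^ j * (M j : ℂ))) ∧
    Differentiable ℂ
      (fun z : ℂ => ∑' j : ℕ, ((c : ℂ) * z) ^ j / ((2 : ℂ) ^ j * (M j : ℂ))) ∧
    (∀ z : ℂ,
      ‖∑' j : ℕ, ((c : ℂ) * z) ^ j / ((2 : ℂ) ^ j * (M j : ℂ))‖ ≤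
        2 * Real.exp (omegaM M (c * ‖z‖))) ∧
    ((fun z : ℂ => ∑' j : ℕ, ((c : ℂ) * z) ^ j / ((2 : ℂ) ^ j * (M j : ℂ))) ∈
        Hinf (vMc M c) ∧
      wnorm (vMc M c)
        (fun z : ℂ => ∑' j : ℕ, ((c : ℂ) * z) ^ j / ((2 : ℂ) ^ j * (M j : ℂ))) ≤ 2) ∧
    (∀ t : ℝ, 0 ≤ t →
      Real.exp (omegaM M (c * t / 2)) ≤
        ‖∑' j : ℕ, ((c : ℂ) * (t : ℂ)) ^ j / ((2 : ℂ) ^ j * (M j : ℂ))‖) := by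
  have hb := term_bound M hM c hc
  have hgeo : ∀ a : ℝ, Summable fun j : ℕ => a * (1 / 2 : ℝ) ^ j := fun a =>
    summable_geometric_two.mul_left a
  have hsum : ∀ z : ℂ,
      Summable fun j : ℕ => ((c : ℂ) * z) ^ j / ((2 : ℂ) ^ j * (M j : ℂ)) := fun z =>
    Summable.of_norm_bounded (hgeo _) (hb ‖z‖ z le_rfl)
  have hdiff : Differentiable ℂ
      (fun z : ℂ => ∑' j : ℕ, ((c : ℂ) * z) ^ j / ((2 : ℂ) ^ j * (M j : ℂ))) := by
    intro z
    have hon := Complex.differentiableOn_tsum_of_summable_norm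
      (F := fun (j : ℕ) (w : ℂ) => ((c : ℂ) * w) ^ j / ((2 : ℂ) ^ j * (M j : ℂ)))
      (hgeo (Real.exp (omegaM M (c * (‖z‖ + 1)))))
      (fun j => by fun_prop) (Metric.isOpen_ball (x := (0 : ℂ)) (ε := ‖z‖ + 1))
      (fun j w hw => hb (‖z‖ + 1) w (by simpa using (mem_ball_zero_iff.1 hw).le) j)
    exact hon.differentiableAt (Metric.isOpen_ball.mem_nhds (by simp))
  have hbound : ∀ z : ℂ,
      ‖∑' j : ℕ, ((c : ℂ) * z) ^ j / ((2 : ℂ) ^ j * (M j : ℂ))‖ ≤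
        2 * Real.exp (omegaM M (c * ‖z‖)) := by
    intro z
    refine tsum_of_norm_bounded ?_ (hb ‖z‖ z le_rfl)
    rw [mul_comm (2 : ℝ)]
    exact hasSum_geometric_two.mul_left _
  have hv : ∀ z : ℂ, ‖∑' j : ℕ, ((c : ℂ) * z) ^ j / ((2 : ℂ) ^ j * (M j : ℂ))‖ *
      vMc M c ‖z‖ ≤ 2 := by
    intro z
    rw [vMc, Real.exp_neg, ← div_eq_mul_inv, div_le_iff₀ (Real.exp_pos _)]
    exact hbound z
  refine ⟨hsum, hdiff, hbound, ⟨⟨hdiff, 2, hv⟩, ciSup_le hv⟩, ?_⟩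
  intro t ht
  have hcast : ∀ j : ℕ, ((c : ℂ) * (t : ℂ)) ^ j / ((2 : ℂ) ^ j * (M j : ℂ)) =
      (((c * t / 2) ^ j / M j : ℝ) : ℂ) := by
    intro j
    push_cast
    rw [div_pow, div_div]
  have hs := hsum t
  simp only [hcast] at hs ⊢
  have hs' : Summable fun j : ℕ => (c * t / 2) ^ j / M j := Complex.summable_ofReal.1 hs
  have hnn : ∀ j : ℕ, 0 ≤ (c * t / 2) ^ j / M j := fun j =>
    div_nonneg (by positivity) (hM.1 j).le
  rw [← Complex.ofReal_tsum, Complex.norm_real, Real.norm_of_nonneg (tsum_nonneg hnn)]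
  have hle : ∀ j : ℕ, (c * t / 2) ^ j / M j ≤ ∑' j : ℕ, (c * t / 2) ^ j / M j := fun j =>
    hs'.le_tsum j (fun i _ => hnn i)
  have h1 : 1 ≤ ∑' j : ℕ, (c * t / 2) ^ j / M j := by
    simpa [hM.2.1] using hle 0
  rw [← Real.le_log_iff_exp_le (by linarith), omegaM]
  split_ifs with h
  · exact Real.log_nonneg h1
  · have hpos : 0 < c * t / 2 := lt_of_le_of_ne (by positivity) (Ne.symm h)
    exact ciSup_le fun j => Real.log_le_log (div_pos (by positivity) (hM.1 j)) (hle j)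
end

section
/- Let M be a weight sequence and let N be a log-convex weight sequence. Then the following are equivalent: (a) N ≼ M, i.e. sup_{j≥1} (N_j/M_j)^{1/j} < ∞; (b) there exist c ≥ 1 and C ≥ 1 with v_N(c·t) ≤ C·v_M(t) for all t ≥ 0; (c) ⋃_{n∈ℕ, n≥1} H^∞_{v_{M,n}}(ℂ) ⊆ ⋃_{n∈ℕ, n≥1} H^∞_{v_{N,n}}(ℂ); (d) ⋂_{c>0} H^∞_{v_{M,c}}(ℂ) ⊆ ⋂_{c>0} H^∞_{v_{N,c}}(ℂ). -/
open Filter Set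

lemma pow_div_bdd {M : ℕ → ℝ} (hM : WeightSeq M) {t : ℝ} (ht : 0 ≤ t) :
    ∃ B : ℝ, ∀ j, t ^ j / M j ≤ B := by
  obtain ⟨hpos, h0, hlim⟩ := hM
  have h1 : ∀ᶠ j : ℕ in atTop, t ^ j / M j ≤ 1 := by
    filter_upwards [hlim.eventually_ge_atTop t, eventually_ge_atTop 1] with j hj hj1
    rw [div_le_one (hpos j)]
    calc t ^ j ≤ ((M j) ^ (1 / (j : ℝ))) ^ j := by gcongr
      _ = M j := by
        rw [← Real.rpow_natCast, ← Real.rpow_mul (hpos j).le]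
        have : (j : ℝ) ≠ 0 := by positivity
        rw [one_div_mul_cancel this, Real.rpow_one]
  have h2 : BddAbove (range fun j => t ^ j / M j) :=
    Filter.IsBoundedUnder.bddAbove_range ⟨1, h1⟩
  obtain ⟨B, hB⟩ := h2
  exact ⟨B, fun j => hB ⟨j, rfl⟩⟩

lemma le_W {M : ℕ → ℝ} (hM : WeightSeq M) {t : ℝ} (ht : 0 ≤ t) (j : ℕ) :
    t ^ j / M j ≤ Real.exp (omegaM M t) := by
  rcases ht.eq_or_lt with rfl | ht
  · rcases j with _ | j
    · simp [omegaM, hM.2.1]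
    · simp [omegaM]
  · have hp : ∀ j, 0 < t ^ j / M j := fun j => div_pos (pow_pos ht j) (hM.1 j)
    rw [← Real.log_le_iff_le_exp (hp j), omegaM, if_neg ht.ne']
    obtain ⟨B, hB⟩ := pow_div_bdd hM ht.le
    refine le_ciSup (f := fun j : ℕ => Real.log (t ^ j / M j)) ⟨Real.log B, ?_⟩ j
    rintro _ ⟨k, rfl⟩
    exact Real.log_le_log (hp k) (hB k)

lemma W_le {M : ℕ → ℝ} (hM : WeightSeq M) {t B : ℝ} (ht : 0 ≤ t)
    (h : ∀ j, t ^ j / M j ≤ B) : Real.exp (omegaM M t) ≤ B := by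
  rcases ht.eq_or_lt with rfl | ht
  · simpa [omegaM, hM.2.1] using h 0
  · have hp : ∀ j, 0 < t ^ j / M j := fun j => div_pos (pow_pos ht j) (hM.1 j)
    have hB : 0 < B := (hp 0).trans_le (h 0)
    rw [← Real.le_log_iff_exp_le hB, omegaM, if_neg ht.ne']
    exact ciSup_le fun j => Real.log_le_log (hp j) (h j)

lemma W_mono {M : ℕ → ℝ} (hM : WeightSeq M) {s t : ℝ} (hs : 0 ≤ s) (hst : s ≤ t) :
    Real.exp (omegaM M s) ≤ Real.exp (omegaM M t) := by
  refine W_le hM hs fun j => le_trans ?_ (le_W hM (hs.trans hst) j)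
  have := hM.1 j
  gcongr

lemma W_attained {N : ℕ → ℝ} (hN : WeightSeq N) (hlc : LogConvexSeq N) (j : ℕ) :
    ∃ t : ℝ, 0 < t ∧ Real.exp (omegaM N t) ≤ t ^ j / N j := by
  have hp := hN.1
  have hmono : Monotone fun k => N (k + 1) / N k := by
    refine monotone_nat_of_le_succ fun k => ?_
    rw [div_le_div_iff₀ (hp _) (hp _)]
    have := hlc (k + 1) (by omega)
    simp only [Nat.add_sub_cancel] at this
    nlinarith
  have ht : 0 < N (j + 1) / N j := div_pos (hp _) (hp _)
  refine ⟨N (j + 1) / N j, ht, W_le hN ht.le ?_⟩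
  set t := N (j + 1) / N j with htdef
  have up : ∀ k, k ≤ j → t ^ k / N k ≤ t ^ (k + 1) / N (k + 1) := by
    intro k hk
    have h1 : N (k + 1) / N k ≤ t := hmono hk
    rw [div_le_iff₀ (hp k)] at h1
    rw [div_le_div_iff₀ (hp _) (hp _), pow_succ]
    have := mul_le_mul_of_nonneg_left h1 (pow_pos ht k).le
    linarith
  have down : ∀ k, j ≤ k → t ^ (k + 1) / N (k + 1) ≤ t ^ k / N k := by
    intro k hk
    have h1 : t ≤ N (k + 1) / N k := hmono hk
    rw [le_div_iff₀ (hp k)] at h1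
    rw [div_le_div_iff₀ (hp _) (hp _), pow_succ]
    have := mul_le_mul_of_nonneg_left h1 (pow_pos ht k).le
    linarith
  intro k
  rcases le_total j k with h | h
  · induction k, h using Nat.le_induction with
    | base => exact le_rfl
    | succ n hn ih => exact (down n hn).trans ih
  · induction h using Nat.decreasingInduction with
    | self => exact le_rfl
    | of_succ n hn ih => exact (up n (by omega)).trans ih

lemma key {M N : ℕ → ℝ} (hM : WeightSeq M) (hN : WeightSeq N) (hlc : LogConvexSeq N)
    {b c C : ℝ} (hc : 0 < c) (hC : 0 ≤ C) (j : ℕ)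
    (h : ∀ t : ℝ, 0 ≤ t → b * (t ^ j / M j) ≤ C * Real.exp (omegaM N (c * t))) :
    b * (N j / M j) ≤ C * c ^ j := by
  obtain ⟨s, hs, hsW⟩ := W_attained hN hlc j
  have h1 := h (s / c) (by positivity)
  rw [mul_div_cancel₀ _ hc.ne'] at h1
  have h2 := h1.trans (mul_le_mul_of_nonneg_left hsW hC)
  have hMj := hM.1 j
  have hNj := hN.1 j
  have hsj := pow_pos hs j
  have hcj := pow_pos hc j
  have h3 := mul_le_mul_of_nonneg_right h2 (show 0 ≤ N j * c ^ j / s ^ j by positivity)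
  have e1 : b * ((s / c) ^ j / M j) * (N j * c ^ j / s ^ j) = b * (N j / M j) := by
    rw [div_pow]; field_simp
  have e2 : C * (s ^ j / N j) * (N j * c ^ j / s ^ j) = C * c ^ j := by
    field_simp
  rwa [e1, e2] at h3

lemma root_le {x S : ℝ} (hx : 0 ≤ x) (hS : 0 ≤ S) {j : ℕ} (hj : 1 ≤ j) :
    x ^ (1 / (j : ℝ)) ≤ S ↔ x ≤ S ^ j := by
  have hj0 : (0 : ℝ) < j := by positivity
  rw [one_div, Real.rpow_inv_le_iff_of_pos hx hS hj0, Real.rpow_natCast]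

lemma root_le' {x c C : ℝ} (hx : 0 ≤ x) (hc : 0 ≤ c) (hC : 1 ≤ C) {j : ℕ} (hj : 1 ≤ j)
    (h : x ≤ C * c ^ j) : x ^ (1 / (j : ℝ)) ≤ C * c := by
  rw [root_le hx (by positivity) hj, mul_pow]
  refine h.trans ?_
  gcongr
  exact le_self_pow₀ hC (by omega)

lemma mem_Hinf {M : ℕ → ℝ} {c : ℝ} {f : ℂ → ℂ} :
    f ∈ Hinf (vMc M c) ↔ Differentiable ℂ f ∧
      ∃ C : ℝ, 1 ≤ C ∧ ∀ z : ℂ, ‖f z‖ ≤ C * Real.exp (omegaM M (c * ‖z‖)) := by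
  have e : ∀ C z, ‖f z‖ * vMc M c ‖z‖ ≤ C ↔ ‖f z‖ ≤ C * Real.exp (omegaM M (c * ‖z‖)) := by
    intro C z
    rw [vMc, Real.exp_neg, ← div_eq_mul_inv, div_le_iff₀ (Real.exp_pos _)]
  constructor
  · rintro ⟨hf, C, hC⟩
    refine ⟨hf, max 1 C, le_max_left _ _, fun z => ?_⟩
    exact (e _ z).1 ((hC z).trans (le_max_right _ _))
  · rintro ⟨hf, C, -, hC⟩
    exact ⟨hf, C, fun z => (e _ z).2 (hC z)⟩

lemma a_imp {M N : ℕ → ℝ} (hM : WeightSeq M) (hN : WeightSeq N)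
    (h : ∃ S : ℝ, ∀ j : ℕ, 1 ≤ j → (N j / M j) ^ (1 / (j : ℝ)) ≤ S) :
    ∃ S : ℕ, 1 ≤ S ∧ ∀ t : ℝ, 0 ≤ t →
      Real.exp (omegaM M t) ≤ Real.exp (omegaM N (S * t)) := by
  obtain ⟨S₀, hS₀⟩ := h
  obtain ⟨n, hn⟩ := exists_nat_ge S₀
  refine ⟨n + 1, by omega, fun t ht => W_le hM ht fun j => ?_⟩
  have hMj := hM.1 j
  have hNj := hN.1 j
  refine le_trans ?_ (le_W hN (by positivity) j)
  have h1 : N j / M j ≤ ((n + 1 : ℕ) : ℝ) ^ j := by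
    rcases Nat.eq_zero_or_pos j with rfl | hj
    · simp [hM.2.1, hN.2.1]
    · rw [← root_le (by positivity) (by positivity) hj]
      push_cast
      linarith [hS₀ j hj]
  rw [div_le_iff₀ hMj] at h1
  rw [mul_pow, div_le_div_iff₀ hMj hNj]
  have := mul_le_mul_of_nonneg_left h1 (pow_nonneg ht j)
  linarith

/-- The test function. -/
noncomputable def testF (M a : ℕ → ℝ) (z : ℂ) : ℂ := ∑' j : ℕ, ((a j / M j : ℝ) : ℂ) * z ^ j

lemma term_le {M a : ℕ → ℝ} (hM : WeightSeq M) (ha : ∀ j, 0 ≤ a j) {c : ℝ} (hc : 0 < c)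
    {R : ℝ} {z : ℂ} (hz : ‖z‖ ≤ R) (j : ℕ) :
    ‖((a j / M j : ℝ) : ℂ) * z ^ j‖ ≤ a j / c ^ j * Real.exp (omegaM M (c * R)) := by
  have hMj := hM.1 j
  have haj := ha j
  have hR : 0 ≤ R := (norm_nonneg z).trans hz
  rw [norm_mul, norm_pow, Complex.norm_real, Real.norm_of_nonneg (by positivity)]
  calc a j / M j * ‖z‖ ^ j ≤ a j / M j * R ^ j := by gcongr
    _ = a j / c ^ j * ((c * R) ^ j / M j) := by rw [mul_pow]; field_simp
    _ ≤ _ := by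
      gcongr
      exact le_W hM (by positivity) j

lemma testF_mem {M a : ℕ → ℝ} (hM : WeightSeq M) (ha : ∀ j, 0 ≤ a j) {c : ℝ} (hc : 0 < c)
    (hs : Summable fun j => a j / c ^ j) : testF M a ∈ Hinf (vMc M c) := by
  rw [mem_Hinf]
  constructor
  · intro z
    have h : DifferentiableOn ℂ (testF M a) (Metric.ball 0 (‖z‖ + 1)) := by
      refine Complex.differentiableOn_tsum_of_summable_norm
        (u := fun j => a j / c ^ j * Real.exp (omegaM M (c * (‖z‖ + 1))))
        (hs.mul_right _) (fun j => by fun_prop) Metric.isOpen_ball ?_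
      intro j w hw
      exact term_le hM ha hc (by simpa using (mem_ball_zero_iff.1 hw).le) j
    exact h.differentiableAt (Metric.isOpen_ball.mem_nhds (by simp))
  · refine ⟨max 1 (∑' j, a j / c ^ j), le_max_left _ _, fun z => ?_⟩
    have h1 : ‖testF M a z‖ ≤ ∑' j, a j / c ^ j * Real.exp (omegaM M (c * ‖z‖)) :=
      tsum_of_norm_bounded (hs.mul_right _).hasSum (fun j => term_le hM ha hc le_rfl j)
    rw [tsum_mul_right] at h1
    refine h1.trans ?_
    gcongr
    exact le_max_right _ _

lemma le_testF {M a : ℕ → ℝ} (hM : WeightSeq M) (ha : ∀ j, 0 ≤ a j) {c : ℝ} (hc : 0 < c)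
    (hs : Summable fun j => a j / c ^ j) {t : ℝ} (ht : 0 ≤ t) (j : ℕ) :
    a j * (t ^ j / M j) ≤ ‖testF M a t‖ := by
  have h0 : ∀ j, 0 ≤ a j / M j * t ^ j := fun j => by
    have := hM.1 j
    have := ha j
    positivity
  have hsum : Summable fun j => a j / M j * t ^ j := by
    refine Summable.of_nonneg_of_le h0 (fun j => ?_)
      (hs.mul_right (Real.exp (omegaM M (c * t))))
    have := term_le hM ha hc (R := t) (z := (t : ℂ)) (by simp [abs_of_nonneg ht]) j
    rw [← Complex.ofReal_pow, ← Complex.ofReal_mul, Complex.norm_real,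
      Real.norm_of_nonneg (h0 j)] at this
    exact this
  have e : testF M a t = ((∑' j, a j / M j * t ^ j : ℝ) : ℂ) := by
    rw [testF, Complex.ofReal_tsum]
    simp
  rw [e, Complex.norm_real, Real.norm_of_nonneg (tsum_nonneg h0)]
  have := hsum.le_tsum j (fun i _ => h0 i)
  calc _ = a j / M j * t ^ j := by ring
    _ ≤ _ := this

lemma key2 {M N a : ℕ → ℝ} (hM : WeightSeq M) (hN : WeightSeq N) (hlc : LogConvexSeq N)
    (ha : ∀ j, 0 ≤ a j) {c : ℝ} (hc : 0 < c)
    (hs : Summable fun j => a j / c ^ j) {d : ℝ} (hd : 0 < d)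
    (h : testF M a ∈ Hinf (vMc N d)) :
    ∃ C : ℝ, 1 ≤ C ∧ ∀ j, a j * (N j / M j) ≤ C * d ^ j := by
  obtain ⟨-, C, hC, hf⟩ := mem_Hinf.1 h
  refine ⟨C, hC, fun j => key hM hN hlc hd (by linarith) j fun t ht => ?_⟩
  have := hf t
  rw [Complex.norm_real, Real.norm_of_nonneg ht] at this
  exact (le_testF hM ha hc hs ht j).trans this

lemma d_imp {M N : ℕ → ℝ} (hM : WeightSeq M) (hN : WeightSeq N) (hlc : LogConvexSeq N)
    (h : (⋂ c : {c : ℝ // 0 < c}, Hinf (vMc M c.1)) ⊆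
        ⋂ c : {c : ℝ // 0 < c}, Hinf (vMc N c.1)) :
    ∃ S : ℝ, ∀ j : ℕ, 1 ≤ j → (N j / M j) ^ (1 / (j : ℝ)) ≤ S := by
  by_contra! hun
  set q : ℕ → ℝ := fun j => (N j / M j) ^ (1 / (j : ℝ)) with hq
  have hx : ∀ j, 0 < N j / M j := fun j => div_pos (hN.1 j) (hM.1 j)
  have hq0 : ∀ j, 0 < q j := fun j => Real.rpow_pos_of_pos (hx j) _
  set Q : ℕ → ℝ := fun j => partialSups q j with hQ
  have hqQ : ∀ i j, i ≤ j → q i ≤ Q j := fun i j hij => le_partialSups_of_le q hij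
  set r : ℕ → ℝ := fun j => Real.sqrt (Q j) with hr
  have hr0 : ∀ j, 0 < r j := fun j => Real.sqrt_pos.2 ((hq0 j).trans_le (hqQ j j le_rfl))
  have ha : ∀ j, 0 ≤ (fun j => 1 / r j ^ j) j := fun j => by
    have := hr0 j
    positivity
  have hs : ∀ c : ℝ, 0 < c → Summable fun j => (fun j => 1 / r j ^ j) j / c ^ j := by
    intro c hc
    obtain ⟨i, -, hi⟩ := hun ((2 / c) ^ 2)
    refine Summable.of_norm_bounded_eventually_nat (g := fun j => (1 / 2 : ℝ) ^ j)
      summable_geometric_two ?_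
    filter_upwards [eventually_ge_atTop i] with j hj
    have h1 : 2 / c ≤ r j := Real.le_sqrt_of_sq_le (hi.le.trans (hqQ i j hj))
    rw [div_le_iff₀ hc] at h1
    have hrj := hr0 j
    rw [Real.norm_of_nonneg (by positivity), div_div, ← mul_pow, one_div_pow]
    gcongr
  have hmem := h (mem_iInter.2 fun c : {c : ℝ // 0 < c} => testF_mem hM ha c.2 (hs c.1 c.2))
  have h1 := mem_iInter.1 hmem ⟨1, one_pos⟩
  obtain ⟨C, hC, hb⟩ := key2 hM hN hlc ha one_pos (hs 1 one_pos) one_pos h1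
  have hex : ∃ j, 1 ≤ j ∧ C ^ 2 < q j := hun (C ^ 2)
  classical
  obtain ⟨j, ⟨hj1, hj⟩, hmin⟩ : ∃ j, (1 ≤ j ∧ max (C ^ 2) (q 0) < q j) ∧
      ∀ i < j, ¬ (1 ≤ i ∧ max (C ^ 2) (q 0) < q i) :=
    ⟨_, Nat.find_spec (hun (max (C ^ 2) (q 0))), fun i hi => Nat.find_min _ hi⟩
  have hQj : Q j = q j := by
    refine le_antisymm (partialSups_le q j _ fun i hi => ?_) (hqQ j j le_rfl)
    rcases hi.eq_or_lt with rfl | hi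
    · exact le_rfl
    rcases Nat.eq_zero_or_pos i with rfl | hi0
    · exact (le_max_right _ _).trans hj.le
    · have := hmin i hi
      push Not at this
      exact (this hi0).trans hj.le
  have hbj := hb j
  have hrj := hr0 j
  simp only [one_pow, mul_one] at hbj
  rw [one_div_mul_eq_div, div_le_iff₀ (by positivity)] at hbj
  have h2 : q j ≤ C * r j := root_le' (hx j).le hrj.le hC hj1 hbj
  have h3 : r j * r j = q j := by
    rw [hr, ← hQj]; exact Real.mul_self_sqrt (by rw [hQj]; exact (hq0 j).le)
  have h4 : r j ≤ C := by
    rw [← h3] at h2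
    exact le_of_mul_le_mul_right h2 hrj
  have h5 : C ^ 2 < q j := (le_max_left _ _).trans_lt hj
  nlinarith

/-- Theorem: for a weight sequence `M` and a log-convex weight sequence `N`,
the conditions `N ≼ M`, `v_M ≼_𝔠 v_N`, inclusion of the inductive-type unions
and inclusion of the projective-type intersections are all equivalent. -/
theorem stmt9 (M N : ℕ → ℝ) (hM : WeightSeq M) (hN : WeightSeq N)
    (hNlc : LogConvexSeq N) :
    ((∃ S : ℝ, ∀ j : ℕ, 1 ≤ j → (N j / M j) ^ (1 / (j : ℝ)) ≤ S) ↔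
      (∃ c : ℝ, 1 ≤ c ∧ ∃ C : ℝ, 1 ≤ C ∧
        ∀ t : ℝ, 0 ≤ t → vM N (c * t) ≤ C * vM M t)) ∧
    ((∃ S : ℝ, ∀ j : ℕ, 1 ≤ j → (N j / M j) ^ (1 / (j : ℝ)) ≤ S) ↔
      (⋃ n : {n : ℕ // 1 ≤ n}, Hinf (vMc M (n.1 : ℝ))) ⊆
        ⋃ n : {n : ℕ // 1 ≤ n}, Hinf (vMc N (n.1 : ℝ))) ∧
    ((∃ S : ℝ, ∀ j : ℕ, 1 ≤ j → (N j / M j) ^ (1 / (j : ℝ)) ≤ S) ↔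
      (⋂ c : {c : ℝ // 0 < c}, Hinf (vMc M c.1)) ⊆
        ⋂ c : {c : ℝ // 0 < c}, Hinf (vMc N c.1)) := by
  refine ⟨⟨fun h => ?_, ?_⟩, ⟨fun h => ?_, fun h => ?_⟩, ⟨fun h => ?_, d_imp hM hN hNlc⟩⟩
  · obtain ⟨S, hS1, hS⟩ := a_imp hM hN h
    refine ⟨S, by exact_mod_cast hS1, 1, le_rfl, fun t ht => ?_⟩
    have := Real.exp_le_exp.1 (hS t ht)
    rw [one_mul, vM, vM]
    exact Real.exp_le_exp.2 (by linarith)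
  · rintro ⟨c, hc, C, hC, h⟩
    have hc0 : 0 < c := by linarith
    refine ⟨C * c, fun j hj => root_le' (div_pos (hN.1 j) (hM.1 j)).le hc0.le hC hj ?_⟩
    have := key hM hN hNlc (b := 1) hc0 (by linarith : 0 ≤ C) j (fun t ht => ?_)
    · simpa using this
    · rw [one_mul]
      refine (le_W hM ht j).trans ?_
      have h1 := h t ht
      rw [vM, vM, Real.exp_neg, Real.exp_neg, ← div_eq_mul_inv, inv_eq_one_div,
        div_le_div_iff₀ (Real.exp_pos _) (Real.exp_pos _), one_mul] at h1
      exact h1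
  · obtain ⟨S, hS1, hS⟩ := a_imp hM hN h
    intro f hf
    obtain ⟨⟨n, hn⟩, hf⟩ := mem_iUnion.1 hf
    obtain ⟨hd, C, hC, hb⟩ := mem_Hinf.1 hf
    refine mem_iUnion.2 ⟨⟨S * n, Nat.mul_pos hS1 hn⟩, mem_Hinf.2 ⟨hd, C, hC, fun z => ?_⟩⟩
    refine (hb z).trans (mul_le_mul_of_nonneg_left ?_ (by linarith))
    have := hS (n * ‖z‖) (by positivity)
    push_cast
    rwa [mul_assoc]
  · have ha : ∀ j, 0 ≤ (fun j : ℕ => (1 / 2 : ℝ) ^ j) j := fun j => by positivity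
    have hs : Summable fun j => (fun j : ℕ => (1 / 2 : ℝ) ^ j) j / (1 : ℝ) ^ j := by
      simpa using summable_geometric_two
    have hm := testF_mem hM ha one_pos hs
    have hm' : testF M (fun j : ℕ => (1 / 2 : ℝ) ^ j) ∈ Hinf (vMc M ((1 : ℕ) : ℝ)) := by
      rw [Nat.cast_one]; exact hm
    obtain ⟨⟨n, hn⟩, hf⟩ := mem_iUnion.1
      (h (mem_iUnion.2 ⟨⟨1, le_rfl⟩, hm'⟩))
    have hn0 : (0 : ℝ) < n := by exact_mod_cast hn
    obtain ⟨C, hC, hb⟩ := key2 hM hN hNlc ha one_pos hs hn0 hf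
    refine ⟨C * (2 * n), fun j hj =>
      root_le' (div_pos (hN.1 j) (hM.1 j)).le (by positivity) hC hj ?_⟩
    have h1 := hb j
    simp only [one_div_pow] at h1
    rw [one_div_mul_eq_div, div_le_iff₀ (by positivity)] at h1
    rw [mul_pow]
    linarith
  · obtain ⟨S, hS1, hS⟩ := a_imp hM hN h
    have hS0 : (0 : ℝ) < S := by exact_mod_cast hS1
    intro f hf
    refine mem_iInter.2 fun c => ?_
    have hc := c.2
    obtain ⟨hd, C, hC, hb⟩ := mem_Hinf.1 (mem_iInter.1 hf ⟨c.1 / S, by positivity⟩)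
    refine mem_Hinf.2 ⟨hd, C, hC, fun z => ?_⟩
    refine (hb z).trans (mul_le_mul_of_nonneg_left ?_ (by linarith))
    have := hS (c.1 / S * ‖z‖) (by positivity)
    rwa [← mul_assoc, mul_div_cancel₀ _ hS0.ne'] at this
end

section
/- Let M, N ∈ LC. Then the following are equivalent: (i) there exist c ∈ ℕ, c ≥ 1, and A ≥ 1 such that N_j ≤ A·(M_{c·j})^{1/c} for all j ∈ ℕ; (ii) there exist c, c₁ ∈ ℕ, c, c₁ ≥ 1, and C ≥ 1 such that (N_{c·j})^{1/c} ≤ C·(M_{c₁·j})^{1/c₁} for all j ∈ ℕ; (iii) for every d ∈ ℕ, d ≥ 1, there exist c ∈ ℕ, c ≥ 1, and C ≥ 1 such that (N_{d·j})^{1/d} ≤ C·(M_{c·j})^{1/c} for all j ∈ ℕ. -/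
open Filter Set

theorem ratio_mono_aux_s10 (N : ℕ → ℝ) (hN : LCset N) (k n : ℕ) :
    N (k + 1) * N (k + n) ≤ N k * N (k + n + 1) := by
  obtain ⟨⟨hp, h0, -⟩, hl, -⟩ := hN
  induction n with
  | zero => simp [mul_comm]
  | succ n ih =>
    have h := hl (k + n + 1) (by omega)
    simp only [Nat.add_sub_cancel] at h
    have e : k + (n + 1) = k + n + 1 := by omega
    rw [e]
    have h1 := hp (k + n)
    have h2 := hp (k + n + 1)
    have h3 := hp k
    refine le_of_mul_le_mul_right ?_ (mul_pos h1 h2)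
    calc N (k + 1) * N (k + n + 1) * (N (k + n) * N (k + n + 1))
        = (N (k + 1) * N (k + n)) * N (k + n + 1) ^ 2 := by ring
      _ ≤ (N k * N (k + n + 1)) * (N (k + n) * N (k + n + 1 + 1)) := by gcongr
      _ = _ := by ring

theorem supermul_aux (N : ℕ → ℝ) (hN : LCset N) (j k : ℕ) :
    N j * N k ≤ N (j + k) := by
  have hr := ratio_mono_aux_s10 N hN
  obtain ⟨⟨hp, h0, -⟩, hl, -⟩ := hN
  induction k with
  | zero => simp [h0]
  | succ k ih =>
    have h := hr k j
    rw [add_comm k j] at h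
    have h1 := hp (j + k)
    have h2 := hp j
    have h3 := hp (j + k + 1)
    refine le_of_mul_le_mul_right ?_ h1
    calc N j * N (k + 1) * N (j + k) = N j * (N (k + 1) * N (j + k)) := by ring
      _ ≤ N j * (N k * N (j + k + 1)) := by gcongr
      _ = (N j * N k) * N (j + k + 1) := by ring
      _ ≤ N (j + k) * N (j + k + 1) := by gcongr
      _ = _ := by rw [← add_assoc]; ring

theorem pow_le_aux (N : ℕ → ℝ) (hN : LCset N) (j c : ℕ) :
    N j ^ c ≤ N (c * j) := by
  induction c with
  | zero => simp [hN.1.2.1]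
  | succ c ih =>
    have h2 := hN.1.1 j
    calc N j ^ (c + 1) = N j ^ c * N j := pow_succ _ _
      _ ≤ N (c * j) * N j := by gcongr
      _ ≤ N (c * j + j) := supermul_aux N hN _ _
      _ = _ := by rw [Nat.succ_mul]

theorem root_le_aux (N : ℕ → ℝ) (hN : LCset N) (j c : ℕ) (hc : 1 ≤ c) :
    N j ≤ N (c * j) ^ (1 / (c : ℝ)) := by
  have h := pow_le_aux N hN j c
  have h2 := (hN.1.1 j).le
  have := Real.rpow_le_rpow (pow_nonneg h2 c) h (z := 1 / (c : ℝ)) (by positivity)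
  rwa [one_div, Real.pow_rpow_inv_natCast h2 (by omega), ← one_div] at this

/-- Lemma: for `M, N ∈ LC`, the conditions
`N_j ≤ A·(M_{cj})^{1/c}` (some `c`), `(N_{cj})^{1/c} ≤ C·(M_{c₁j})^{1/c₁}`
(some `c, c₁`) and the version universally quantified in `d` are equivalent. -/
theorem stmt10 (M N : ℕ → ℝ) (hM : LCset M) (hN : LCset N) :
    ((∃ c : ℕ, 1 ≤ c ∧ ∃ A : ℝ, 1 ≤ A ∧
        ∀ j : ℕ, N j ≤ A * (M (c * j)) ^ (1 / (c : ℝ))) ↔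
      (∃ c c₁ : ℕ, 1 ≤ c ∧ 1 ≤ c₁ ∧ ∃ C : ℝ, 1 ≤ C ∧
        ∀ j : ℕ, (N (c * j)) ^ (1 / (c : ℝ)) ≤ C * (M (c₁ * j)) ^ (1 / (c₁ : ℝ)))) ∧
    ((∃ c : ℕ, 1 ≤ c ∧ ∃ A : ℝ, 1 ≤ A ∧
        ∀ j : ℕ, N j ≤ A * (M (c * j)) ^ (1 / (c : ℝ))) ↔
      (∀ d : ℕ, 1 ≤ d → ∃ c : ℕ, 1 ≤ c ∧ ∃ C : ℝ, 1 ≤ C ∧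
        ∀ j : ℕ, (N (d * j)) ^ (1 / (d : ℝ)) ≤ C * (M (c * j)) ^ (1 / (c : ℝ)))) := by
  refine ⟨⟨?_, ?_⟩, ⟨?_, ?_⟩⟩
  · rintro ⟨c, hc, A, hA, h⟩
    exact ⟨1, c, le_rfl, hc, A, hA, fun j => by simpa using h j⟩
  · rintro ⟨c, c₁, hc, hc₁, C, hC, h⟩
    exact ⟨c₁, hc₁, C, hC, fun j => (root_le_aux N hN j c hc).trans (h j)⟩
  · rintro ⟨c, hc, A, hA, h⟩ d hd
    refine ⟨c * d, Nat.mul_pos hc hd, A ^ (1 / (d : ℝ)),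
      Real.one_le_rpow hA (by positivity), fun j => ?_⟩
    have hm := (hM.1.1 (c * (d * j))).le
    have := Real.rpow_le_rpow (hN.1.1 (d * j)).le (h (d * j)) (z := 1 / (d : ℝ)) (by positivity)
    rw [Real.mul_rpow (by linarith) (Real.rpow_nonneg hm _), ← Real.rpow_mul hm] at this
    rw [mul_assoc c d j]
    have e : (1 / ((c * d : ℕ) : ℝ)) = 1 / (c : ℝ) * (1 / (d : ℝ)) := by
      push_cast
      rw [one_div_mul_one_div]
    rw [e]
    exact this
  · intro h
    obtain ⟨c, hc, C, hC, h⟩ := h 1 le_rfl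
    exact ⟨c, hc, C, hC, fun j => by simpa using h j⟩
end

section
/- Let u and w be normalized weights with u convex, and assume that H^∞_u(ℂ) ⊆ H^∞_w(ℂ) as sets. Then: (i) there exists a ≥ 1 such that w(t)² ≤ a·u(t) for all t ≥ 0; (ii) if in addition u or w is of moderate growth, then there exist a ≥ 1 and b ≥ 1 such that w(a·t) ≤ b·u(t) for all t ≥ 0. -/
open Filter Set

lemma aux_support (f : ℝ → ℝ) (hf : ConvexOn ℝ Set.univ f) (s : ℝ) :
    ∃ p : ℝ, ∀ y, f s + p * (y - s) ≤ f y := by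
  have hi : s ∈ interior (Set.univ : Set ℝ) := by simp
  refine ⟨derivWithin f (Set.Ioi s) s, fun y => ?_⟩
  rcases lt_trichotomy y s with h | h | h
  · have h1 := hf.slope_le_leftDeriv_of_mem_interior (Set.mem_univ y) hi h
    have h2 := h1.trans (hf.leftDeriv_le_rightDeriv_of_mem_interior hi)
    rw [slope_def_field, div_le_iff₀ (by linarith)] at h2
    linarith
  · subst h; simp
  · have h1 := hf.rightDeriv_le_slope_of_mem_interior hi (Set.mem_univ y) h
    rw [slope_def_field, le_div_iff₀ (by linarith)] at h1
    linarith

lemma aux_mono (u : ℝ → ℝ) (hu : IsWeight u) (hun : NormalizedWeight u)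
    (huc : ConvexWeight u) (t : ℝ) (ht : 1 ≤ t) :
    ∃ j : ℕ, ∀ x, 0 ≤ x → x ^ j * u x ≤ t ^ (j + 1) * u t := by
  obtain ⟨hpos, -, hanti, -⟩ := hu
  obtain ⟨p, hp⟩ := aux_support _ huc (Real.log t)
  have ht0 : 0 < t := by linarith
  simp only [Real.exp_log ht0] at hp
  have hp0 : 0 ≤ p := by
    have h1 := hp (Real.log t - 1)
    have h2 : u t ≤ u (Real.exp (Real.log t - 1)) := by
      apply hanti (Set.mem_Ici.2 (Real.exp_pos _).le) (Set.mem_Ici.2 ht0.le)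
      calc Real.exp (Real.log t - 1) ≤ Real.exp (Real.log t) := Real.exp_le_exp.2 (by linarith)
        _ = t := Real.exp_log ht0
    have h3 := Real.log_le_log (hpos t ht0.le) h2
    linarith
  refine ⟨⌊p⌋₊, ?_⟩
  have key : ∀ x, 1 ≤ x → x ^ ⌊p⌋₊ * u x ≤ t ^ (⌊p⌋₊ + 1) * u t := by
    intro x hx
    have hx0 : 0 < x := by linarith
    have h1 := hp (Real.log x)
    rw [Real.exp_log hx0] at h1
    have hux := hpos x hx0.le
    have hut := hpos t ht0.le
    rw [← Real.log_le_log_iff (by positivity) (by positivity),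
      Real.log_mul (by positivity) hux.ne', Real.log_mul (by positivity) hut.ne',
      Real.log_pow, Real.log_pow]
    have hlx := Real.log_nonneg hx
    have hlt := Real.log_nonneg ht
    have f1 := Nat.floor_le hp0
    have f2 := (Nat.lt_floor_add_one p).le
    have a1 := mul_le_mul_of_nonneg_right f1 hlx
    have a2 := mul_le_mul_of_nonneg_right f2 hlt
    push_cast
    linarith
  intro x hx
  rcases le_total x 1 with h | h
  · refine le_trans ?_ (key 1 le_rfl)
    rw [hun x hx h, hun 1 zero_le_one le_rfl]
    simpa using pow_le_one₀ hx h
  · exact key x h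

lemma aux_main_s12 (u w : ℝ → ℝ) (hu : IsWeight u) (hun : NormalizedWeight u)
    (huc : ConvexWeight u) (hw : IsWeight w)
    (h : Hinf u ⊆ Hinf w) : ∃ C : ℝ, ∀ t, 1 ≤ t → w t ≤ C * (t * u t) := by
  by_contra! hcon
  choose t ht1 ht using fun n : ℕ => hcon (4 ^ n)
  choose j hj using fun n : ℕ => aux_mono u hu hun huc (t n) (ht1 n)
  have hupos := hu.1
  have ht0 : ∀ n, 0 < t n := fun n => by linarith [ht1 n]
  have hut : ∀ n, 0 < u (t n) := fun n => hupos _ (ht0 n).le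
  set d : ℕ → ℝ := fun n => (t n) ^ (j n + 1) * u (t n) with hd
  have hd0 : ∀ n, 0 < d n := fun n => mul_pos (pow_pos (ht0 n) _) (hut n)
  set F : ℕ → ℂ → ℂ := fun n z => (((1 / 2 : ℝ) ^ n / d n : ℝ) : ℂ) * z ^ (j n) with hF
  have hnorm : ∀ n z, ‖F n z‖ = (1 / 2 : ℝ) ^ n / d n * ‖z‖ ^ (j n) := by
    intro n z
    have := hd0 n
    rw [hF]
    simp only [norm_mul, norm_pow, Complex.norm_real]
    rw [Real.norm_of_nonneg (by positivity)]
  have hbd : ∀ n z, ‖F n z‖ * u ‖z‖ ≤ (1 / 2 : ℝ) ^ n := by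
    intro n z
    rw [hnorm]
    have h1 := hj n ‖z‖ (norm_nonneg z)
    have := hd0 n
    calc (1 / 2 : ℝ) ^ n / d n * ‖z‖ ^ (j n) * u ‖z‖
        = (1 / 2 : ℝ) ^ n / d n * (‖z‖ ^ (j n) * u ‖z‖) := by ring
      _ ≤ (1 / 2 : ℝ) ^ n / d n * d n := by gcongr
      _ = _ := by field_simp
  have hbd2 : ∀ n z, ‖F n z‖ ≤ (1 / 2 : ℝ) ^ n / u ‖z‖ := fun n z => by
    rw [le_div_iff₀ (hupos _ (norm_nonneg z))]; exact hbd n z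
  have hgeo : Summable (fun n : ℕ => (1 / 2 : ℝ) ^ n) := summable_geometric_two
  have hsn : ∀ z, Summable (fun n => ‖F n z‖) := fun z =>
    Summable.of_nonneg_of_le (fun n => norm_nonneg _) (fun n => hbd2 n z) (hgeo.div_const _)
  have hmem : (fun z => ∑' n, F n z) ∈ Hinf u := by
    refine ⟨fun z => ?_, 2, fun z => ?_⟩
    · have hz : z ∈ Metric.ball (0 : ℂ) (‖z‖ + 1) := by simp
      refine (Complex.differentiableOn_tsum_of_summable_norm (hgeo.div_const (u (‖z‖ + 1)))
        (fun n => ?_) Metric.isOpen_ball (fun n y hy => ?_)).differentiableAt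
        (Metric.isOpen_ball.mem_nhds hz)
      · exact ((differentiable_id.pow _).const_mul _).differentiableOn
      · refine (hbd2 n y).trans ?_
        have hy' : ‖y‖ ≤ ‖z‖ + 1 := by
          rw [mem_ball_zero_iff] at hy; exact hy.le
        have hz1 : 0 ≤ ‖z‖ + 1 := by positivity
        exact div_le_div_of_nonneg_left (by positivity) (hupos _ hz1)
          (hu.2.2.1 (Set.mem_Ici.2 (norm_nonneg y)) (Set.mem_Ici.2 hz1) hy')
    · have h1 := norm_tsum_le_tsum_norm (hsn z)
      have h2 : (∑' n, ‖F n z‖) ≤ ∑' n : ℕ, (1 / 2 : ℝ) ^ n / u ‖z‖ :=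
        (hsn z).tsum_le_tsum (fun n => hbd2 n z) (hgeo.div_const _)
      rw [tsum_div_const, tsum_geometric_two] at h2
      rw [← le_div_iff₀ (hupos _ (norm_nonneg z))]
      exact h1.trans h2
  obtain ⟨-, C, hC⟩ := h hmem
  obtain ⟨n, hn⟩ := pow_unbounded_of_one_lt C (one_lt_two)
  have h1 := hC (t n : ℂ)
  have hnt : ‖(t n : ℂ)‖ = t n := by
    rw [Complex.norm_real, Real.norm_of_nonneg (ht0 n).le]
  have hFr : ∀ m, F m (t n : ℂ) = ((‖F m (t n : ℂ)‖ : ℝ) : ℂ) := by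
    intro m
    rw [hnorm, hnt, hF]
    push_cast
    ring
  have h2 : ‖F n (t n : ℂ)‖ ≤ ‖∑' m, F m (t n : ℂ)‖ := by
    have e : (∑' m, F m (t n : ℂ)) = ((∑' m, ‖F m (t n : ℂ)‖ : ℝ) : ℂ) := by
      rw [Complex.ofReal_tsum]
      exact tsum_congr hFr
    rw [e, Complex.norm_real, Real.norm_of_nonneg (tsum_nonneg fun m => norm_nonneg _)]
    exact (hsn _).le_tsum n (fun m _ => norm_nonneg _)
  have hwt := hw.1 _ (ht0 n).le
  have h3 : ‖F n (t n : ℂ)‖ * w (t n) ≤ C := by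
    refine le_trans ?_ h1
    simp only [hnt]
    exact mul_le_mul_of_nonneg_right h2 hwt.le
  have h4 : ‖F n (t n : ℂ)‖ = (1 / 2 : ℝ) ^ n / (t n * u (t n)) := by
    rw [hnorm, hnt, hd]
    have := ht0 n
    have := hut n
    simp only [pow_succ]
    field_simp
  have h5 : (2 : ℝ) ^ n ≤ ‖F n (t n : ℂ)‖ * w (t n) := by
    have p0 : 0 < t n * u (t n) := mul_pos (ht0 n) (hut n)
    rw [h4]
    calc (2 : ℝ) ^ n = (1 / 2 : ℝ) ^ n / (t n * u (t n)) * (4 ^ n * (t n * u (t n))) := by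
          have : (4 : ℝ) ^ n = 2 ^ n * 2 ^ n := by rw [← mul_pow]; norm_num
          have e2 : (1 / 2 : ℝ) ^ n * 2 ^ n = 1 := by rw [← mul_pow]; norm_num
          rw [this, div_mul_eq_mul_div, eq_div_iff p0.ne']
          linear_combination (-(2 : ℝ) ^ n * (t n * u (t n))) * e2
      _ ≤ _ := by
          have := ht n
          gcongr
  linarith

lemma aux_bdd_s12 (w : ℝ → ℝ) (hw : IsWeight w) : ∃ B : ℝ, 0 ≤ B ∧ ∀ t, 1 ≤ t → t * w t ≤ B := by
  obtain ⟨hpos, -, hanti, hlim⟩ := hw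
  have h1 := (hlim 1).eventually (eventually_le_nhds (zero_lt_one))
  obtain ⟨T, hT⟩ := eventually_atTop.1 h1
  have w0 := hpos 0 le_rfl
  refine ⟨1 + |T| * w 0, by positivity, fun t ht => ?_⟩
  have : 0 ≤ |T| * w 0 := by positivity
  rcases le_total T t with h | h
  · have := hT t h
    simp only [pow_one] at this
    linarith
  · have h0 : 0 ≤ t := by linarith
    have h2 : w t ≤ w 0 := hanti (Set.mem_Ici.2 le_rfl) (Set.mem_Ici.2 h0) h0
    have h3 := hpos t h0
    have h4 : t ≤ |T| := h.trans (le_abs_self T)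
    have : t * w t ≤ |T| * w 0 := by gcongr
    linarith

/-- Proposition: for normalized weights `u`, `w` with `u` convex and
`H^∞_u(ℂ) ⊆ H^∞_w(ℂ)`: (i) `w² ≤ a·u`; (ii) if moreover `u` or `w` is of
moderate growth, then `w(a·t) ≤ b·u(t)`. -/
theorem stmt12 (u w : ℝ → ℝ) (hu : IsWeight u) (hun : NormalizedWeight u)
    (huc : ConvexWeight u) (hw : IsWeight w) (hwn : NormalizedWeight w)
    (h : Hinf u ⊆ Hinf w) :
    (∃ a : ℝ, 1 ≤ a ∧ ∀ t : ℝ, 0 ≤ t → (w t) ^ 2 ≤ a * u t) ∧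
    ((ModerateGrowthW u ∨ ModerateGrowthW w) →
      ∃ a : ℝ, 1 ≤ a ∧ ∃ b : ℝ, 1 ≤ b ∧
        ∀ t : ℝ, 0 ≤ t → w (a * t) ≤ b * u t) := by
  have hi : ∃ a : ℝ, 1 ≤ a ∧ ∀ t : ℝ, 0 ≤ t → (w t) ^ 2 ≤ a * u t := by
    obtain ⟨C, hC⟩ := aux_main_s12 u w hu hun huc hw h
    obtain ⟨B, hB0, hB⟩ := aux_bdd_s12 w hw
    refine ⟨1 + |C| * B, by linarith [mul_nonneg (abs_nonneg C) hB0], fun t ht => ?_⟩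
    have hut := hu.1 t ht
    have hwt := hw.1 t ht
    have hCB := mul_nonneg (abs_nonneg C) hB0
    rcases le_total t 1 with h1 | h1
    · rw [hun t ht h1, hwn t ht h1]; linarith
    · have e1 := hC t h1
      have e2 := hB t h1
      calc w t ^ 2 = w t * w t := by ring
        _ ≤ (C * (t * u t)) * w t := by gcongr
        _ = C * ((t * w t) * u t) := by ring
        _ ≤ |C| * ((t * w t) * u t) := by gcongr; exact le_abs_self C
        _ ≤ |C| * (B * u t) := by gcongr
        _ ≤ (1 + |C| * B) * u t := by nlinarith
  refine ⟨hi, ?_⟩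
  obtain ⟨a, ha, hau⟩ := hi
  rintro (⟨H, hH, hm⟩ | ⟨H, hH, hm⟩)
  · have hE : 1 ≤ Real.exp H := Real.one_le_exp (by linarith)
    have haE : 1 ≤ a * Real.exp H := by nlinarith
    refine ⟨H, hH, a * Real.exp H, haE, fun t ht => ?_⟩
    have hut := hu.1 t ht
    refine abs_le_of_sq_le_sq' ?_ (by positivity) |>.2
    calc w (H * t) ^ 2 ≤ a * u (H * t) := hau _ (by positivity)
      _ ≤ a * (Real.exp H * u t ^ 2) := by gcongr; exact hm t ht
      _ = (a * Real.exp H) * u t ^ 2 := by ring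
      _ ≤ (a * Real.exp H) ^ 2 * u t ^ 2 := by gcongr; nlinarith
      _ = (a * Real.exp H * u t) ^ 2 := by ring
  · have hE : 1 ≤ Real.exp H := Real.one_le_exp (by linarith)
    refine ⟨H, hH, Real.exp H * a, by nlinarith, fun t ht => ?_⟩
    calc w (H * t) ≤ Real.exp H * w t ^ 2 := hm t ht
      _ ≤ Real.exp H * (a * u t) := by gcongr; exact hau t ht
      _ = _ := by ring
end
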